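/- arXiv:1906.01829 — 2 statements merged into one kernel-verified Lean document; each statement's English description precedes it below -/
import Mathlib

section
/- Let d be a positive integer, let f : ℝ^d → ℝ and g : ℝ^d → ℝ, and suppose: (1) f is bounded on the box [-1,1]^d and there exist an open set A ⊇ {-1,1}^d and η > 0 such that |f(x₁) - f(x₂)| ≤ η‖x₁ - x₂‖ for all x₁, x₂ ∈ A (Euclidean norm); (2) g is continuous on [-1,1]^d, g(x) = 0 for every x ∈ {-1,1}^d, g(x) > 0 for every x ∈ [-1,1]^d with x ∉ {-1,1}^d, and for every y ∈ {-1,1}^d there exist a neighborhood S(y) of y and ε(y) > 0 such that g(x) ≥ ε(y)‖x - y‖ for all x ∈ S(y) ∩ [-1,1]^d. Then there exists β₀ ≥ 0 such that for every β > β₀, the infimum of f(x) + β·g(x) over x ∈ [-1,1]^d equals the minimum of f(x) over x ∈ {-1,1}^d. -/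
open Set

noncomputable section

/-- The box `[-1,1]^d` in `ℝ^d` (Euclidean space). -/
def box (d : ℕ) : Set (EuclideanSpace ℝ (Fin d)) :=
  {x | ∀ i, x i ∈ Set.Icc (-1 : ℝ) 1}

/-- The vertex set `{-1,1}^d` in `ℝ^d` (Euclidean space). -/
def vtx (d : ℕ) : Set (EuclideanSpace ℝ (Fin d)) :=
  {x | ∀ i, x i = -1 ∨ x i = 1}

/-!
Let `V` be the feasible set. Since `g` is nonnegative, a multiple `β` with `sInf (f '' V) ≤ f + β g`
can always be replaced by a larger one, so by compactness it is enough to find such a multiple near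
each point. Near a feasible point, `f` drops at most linearly with the distance while `g` grows at
least linearly. Near an infeasible point, `g` is bounded away from zero, and a large multiple of it
compensates for the lower bound of `f`.
-/

section ExactPenalty

open Filter Topology

lemma csInf_eq_csInf_of_subset {α : Type*} [ConditionallyCompleteLattice α] {s t : Set α}
    (hts : t ⊆ s) (ht : t.Nonempty) (h : sInf t ∈ lowerBounds s) : sInf s = sInf t :=
  le_antisymm (csInf_le_csInf ⟨_, h⟩ ht hts) (le_csInf (ht.mono hts) h)

lemma bddBelow_image_of_abs_le {X : Type*} {f : X → ℝ} {s : Set X} {C : ℝ}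
    (hf : ∀ x ∈ s, |f x| ≤ C) : BddBelow (f '' s) :=
  ⟨-C, forall_mem_image.mpr fun x hx => neg_le_of_abs_le (hf x hx)⟩

lemma eventually_le_add_mul_dist_of_abs_sub_le {E : Type*} [SeminormedAddCommGroup E]
    {l : Filter E} {f : E → ℝ} {y : E} {η : ℝ} (hf : ∀ᶠ x in l, |f x - f y| ≤ η * ‖x - y‖) :
    ∀ᶠ x in l, f y ≤ f x + η * dist x y := by
  filter_upwards [hf] with x hx
  rw [dist_eq_norm]
  linarith [neg_le_of_abs_le hx]

lemma eventually_mul_dist_le_of_mem_nhds {E : Type*} [SeminormedAddCommGroup E] {K S : Set E}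
    {g : E → ℝ} {y : E} {ε : ℝ} (hS : S ∈ 𝓝 y) (hg : ∀ x ∈ S ∩ K, ε * ‖x - y‖ ≤ g x) :
    ∀ᶠ x in 𝓝[K] y, ε * dist x y ≤ g x := by
  simp only [dist_eq_norm]
  exact mem_nhdsWithin_iff_exists_mem_nhds_inter.mpr ⟨S, hS, hg⟩

lemma exists_eventually_le_add_mul_of_linear_growth {X : Type*} [PseudoMetricSpace X]
    {l : Filter X} {f g : X → ℝ} {y : X} {η ε : ℝ} (hε : 0 < ε)
    (hf : ∀ᶠ x in l, f y ≤ f x + η * dist x y) (hg : ∀ᶠ x in l, ε * dist x y ≤ g x) :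
    ∃ c, ∀ᶠ x in l, f y ≤ f x + c * g x := by
  refine ⟨|η| / ε, ?_⟩
  filter_upwards [hf, hg] with x hfx hgx
  calc
    f y ≤ f x + η * dist x y := hfx
    _ ≤ f x + |η| * dist x y := by gcongr; exact le_abs_self η
    _ = f x + |η| / ε * (ε * dist x y) := by field_simp
    _ ≤ f x + |η| / ε * g x := by gcongr

section TopologicalSpace

variable {X : Type*} [TopologicalSpace X] {K : Set X} {f g : X → ℝ} {m : ℝ}

lemma exists_eventually_le_add_mul_of_pos {y : X} (hf : BddBelow (f '' K))
    (hg : LowerSemicontinuousWithinAt g K y) (hy : 0 < g y) :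
    ∃ c, ∀ᶠ x in 𝓝[K] y, m ≤ f x + c * g x := by
  obtain ⟨b, hb⟩ := hf
  refine ⟨|m - b| / (g y / 2), ?_⟩
  filter_upwards [hg (g y / 2) (half_lt_self hy), self_mem_nhdsWithin] with x hgx hxK
  calc
    m ≤ b + |m - b| := by linarith [le_abs_self (m - b)]
    _ = b + |m - b| / (g y / 2) * (g y / 2) := by field_simp
    _ ≤ f x + |m - b| / (g y / 2) * g x := by
      gcongr
      exact hb (mem_image_of_mem f hxK)

lemma exists_forall_le_add_mul_of_isCompact (hK : IsCompact K) (hg : ∀ x ∈ K, 0 ≤ g x)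
    (h : ∀ y ∈ K, ∃ c, ∀ᶠ x in 𝓝[K] y, m ≤ f x + c * g x) :
    ∃ c, ∀ β ≥ c, ∀ x ∈ K, m ≤ f x + β * g x := by
  choose! c hc using h
  obtain ⟨t, -, hKt⟩ := hK.elim_nhdsWithin_subcover _ hc
  obtain ⟨b, hb⟩ := (t.image c).bddAbove
  refine ⟨b, fun β hβ x hx => ?_⟩
  obtain ⟨y, hyt, hxy⟩ := mem_iUnion₂.mp (hKt hx)
  have hcβ : c y ≤ β := (hb (Finset.mem_coe.mpr (Finset.mem_image_of_mem c hyt))).trans hβ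
  calc
    m ≤ f x + c y * g x := hxy
    _ ≤ f x + β * g x := by gcongr; exact hg x hx

end TopologicalSpace

theorem stmt_0_general {X : Type*} [PseudoMetricSpace X] {K V : Set X} {f g : X → ℝ}
    (hK : IsCompact K) (hV : V.Nonempty) (hVK : V ⊆ K)
    (hf_bdd : BddBelow (f '' K))
    (hf_calm : ∀ y ∈ V, ∃ η, ∀ᶠ x in 𝓝[K] y, f y ≤ f x + η * dist x y)
    (hg_lsc : LowerSemicontinuousOn g K)
    (hg_zero : ∀ x ∈ V, g x = 0)
    (hg_pos : ∀ x ∈ K, x ∉ V → 0 < g x)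
    (hg_growth : ∀ y ∈ V, ∃ ε > 0, ∀ᶠ x in 𝓝[K] y, ε * dist x y ≤ g x) :
    ∃ β₀ : ℝ, 0 ≤ β₀ ∧ ∀ β > β₀,
      sInf ((fun x => f x + β * g x) '' K) = sInf (f '' V) := by
  have hg_nonneg : ∀ x ∈ K, 0 ≤ g x := fun x hx =>
    (em (x ∈ V)).elim (fun hxV => (hg_zero x hxV).ge) (fun hxV => (hg_pos x hx hxV).le)
  have h_local : ∀ y ∈ K, ∃ c, ∀ᶠ x in 𝓝[K] y, sInf (f '' V) ≤ f x + c * g x := by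
    intro y hy
    by_cases hyV : y ∈ V
    · obtain ⟨η, hη⟩ := hf_calm y hyV
      obtain ⟨ε, hε, hgε⟩ := hg_growth y hyV
      obtain ⟨c, hc⟩ := exists_eventually_le_add_mul_of_linear_growth hε hη hgε
      have hy_min : sInf (f '' V) ≤ f y :=
        csInf_le (hf_bdd.mono (image_mono hVK)) (mem_image_of_mem f hyV)
      exact ⟨c, hc.mono fun x hx => hy_min.trans hx⟩
    · exact exists_eventually_le_add_mul_of_pos hf_bdd (hg_lsc y hy) (hg_pos y hy hyV)
  obtain ⟨c, hc⟩ := exists_forall_le_add_mul_of_isCompact hK hg_nonneg h_local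
  refine ⟨max c 0, le_max_right c 0, fun β hβ => ?_⟩
  have h_image : (fun x => f x + β * g x) '' V = f '' V :=
    image_congr fun x hx => by simp [hg_zero x hx]
  rw [← h_image]
  refine csInf_eq_csInf_of_subset (image_mono hVK) (hV.image _) ?_
  rw [h_image, mem_lowerBounds, forall_mem_image]
  exact hc β ((le_max_left c 0).trans hβ.le)

end ExactPenalty

lemma isCompact_box (d : ℕ) : IsCompact (box d) := by
  have h_image : box d = WithLp.toLp 2 '' Icc (-1 : Fin d → ℝ) 1 := by
    ext x
    exact ⟨fun hx => ⟨x.ofLp, ⟨fun i => (hx i).1, fun i => (hx i).2⟩, rfl⟩,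
      fun ⟨y, hy, hyx⟩ i => hyx ▸ ⟨hy.1 i, hy.2 i⟩⟩
  exact h_image ▸ isCompact_Icc.image (PiLp.continuous_toLp 2 _)

lemma vtx_nonempty (d : ℕ) : (vtx d).Nonempty :=
  ⟨WithLp.toLp 2 1, fun _ => Or.inr rfl⟩

lemma vtx_subset_box (d : ℕ) : vtx d ⊆ box d := by
  intro x hx i
  rcases hx i with h | h <;> simp [h]

/-- Exact-penalty equivalence: for sufficiently large `β`, the infimum of the penalized
continuous problem over the box equals the minimum of the binary problem over the vertices. -/
theorem stmt_0 (d : ℕ) (hd : 0 < d) (f g : EuclideanSpace ℝ (Fin d) → ℝ)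
    (hf_bdd : ∃ C : ℝ, ∀ x ∈ box d, |f x| ≤ C)
    (hf_holder : ∃ A : Set (EuclideanSpace ℝ (Fin d)), IsOpen A ∧ vtx d ⊆ A ∧
      ∃ η : ℝ, 0 < η ∧ ∀ x₁ ∈ A, ∀ x₂ ∈ A, |f x₁ - f x₂| ≤ η * ‖x₁ - x₂‖)
    (hg_cont : ContinuousOn g (box d))
    (hg_zero : ∀ x ∈ vtx d, g x = 0)
    (hg_pos : ∀ x ∈ box d, x ∉ vtx d → 0 < g x)
    (hg_growth : ∀ y ∈ vtx d, ∃ S ∈ nhds y, ∃ ε : ℝ, 0 < ε ∧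
      ∀ x ∈ S ∩ box d, ε * ‖x - y‖ ≤ g x) :
    ∃ β₀ : ℝ, 0 ≤ β₀ ∧ ∀ β > β₀,
      sInf ((fun x => f x + β * g x) '' box d) = sInf (f '' vtx d) := by
  obtain ⟨C, hC⟩ := hf_bdd
  obtain ⟨A, hA, hVA, η, -, hη⟩ := hf_holder
  have hf_calm : ∀ y ∈ vtx d, ∃ η, ∀ᶠ x in nhdsWithin y (box d), f y ≤ f x + η * dist x y :=
    fun y hy => ⟨η, eventually_le_add_mul_dist_of_abs_sub_le <|
      Filter.mem_of_superset (mem_nhdsWithin_of_mem_nhds (hA.mem_nhds (hVA hy)))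
        fun x hx => hη x hx y (hVA hy)⟩
  have hg_linear : ∀ y ∈ vtx d, ∃ ε > 0, ∀ᶠ x in nhdsWithin y (box d), ε * dist x y ≤ g x :=
    fun y hy =>
      let ⟨_, hS, ε, hε, hgε⟩ := hg_growth y hy
      ⟨ε, hε, eventually_mul_dist_le_of_mem_nhds hS hgε⟩
  exact stmt_0_general (isCompact_box d) (vtx_nonempty d) (vtx_subset_box d)
    (bddBelow_image_of_abs_le hC) hf_calm hg_cont.lowerSemicontinuousOn hg_zero hg_pos hg_linear
end
end

section
/- Let N be a positive integer, z ∈ ℝ^N, and let z̄ = (1/N)·Σⱼ zⱼ. Then for every index k, the limit as T → ∞ of T·( exp(z_k/T)/Σₗ exp(zₗ/T) - 1/N ) equals (z_k - z̄)/N. -/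
open Filter

noncomputable section

/-! With `s = T⁻¹`, the quantity `T * (softmax (z / T) k - 1 / N)` is the difference quotient
`(softmax (s • z) k - softmax 0 k) / s`, so its limit is the derivative of the softmax at the origin
in the direction `z`. Since `log (softmax x k) = x k - log (∑ l, exp (x l))`, and the gradient of
log-sum-exp is the softmax itself, that derivative is `softmax 0 k * (z k - ∑ l, softmax 0 l * z l)`
with all weights equal to `1 / N`. -/

/-- The softmax of a real vector of logits at temperature one; temperature `T` is expressed by
evaluating at `T⁻¹ • x`. -/
def softmax {ι : Type*} [Fintype ι] (x : ι → ℝ) (k : ι) : ℝ :=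
  Real.exp (x k) / ∑ l, Real.exp (x l)

section Softmax

open ContinuousLinearMap

variable {ι : Type*} [Fintype ι]

lemma softmax_zero (k : ι) : softmax 0 k = 1 / Fintype.card ι := by
  simp [softmax]

lemma sum_exp_pos [Nonempty ι] (x : ι → ℝ) : 0 < ∑ l, Real.exp (x l) :=
  Finset.sum_pos (fun l _ ↦ Real.exp_pos (x l)) Finset.univ_nonempty

lemma softmax_eq_exp_sub_log_sum_exp (x : ι → ℝ) (k : ι) :
    softmax x k = Real.exp (x k - Real.log (∑ l, Real.exp (x l))) := by
  have : Nonempty ι := ⟨k⟩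
  rw [softmax, Real.exp_sub, Real.exp_log (sum_exp_pos x)]

lemma hasFDerivAt_log_sum_exp [Nonempty ι] (x : ι → ℝ) :
    HasFDerivAt (fun y : ι → ℝ ↦ Real.log (∑ l, Real.exp (y l)))
      (∑ l, softmax x l • (proj l : (ι → ℝ) →L[ℝ] ℝ)) x := by
  have hsum : HasFDerivAt (fun y : ι → ℝ ↦ ∑ l, Real.exp (y l))
      (∑ l, Real.exp (x l) • proj l) x :=
    .fun_sum fun l _ ↦ (hasFDerivAt_apply l x).exp
  refine (hsum.log (sum_exp_pos x).ne').congr_fderiv ?_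
  simp only [softmax, Finset.smul_sum, smul_smul, inv_mul_eq_div]

lemma hasFDerivAt_softmax (x : ι → ℝ) (k : ι) :
    HasFDerivAt (softmax · k)
      (softmax x k • (proj k - ∑ l, softmax x l • (proj l : (ι → ℝ) →L[ℝ] ℝ))) x := by
  have : Nonempty ι := ⟨k⟩
  simpa only [softmax_eq_exp_sub_log_sum_exp _ k] using
    ((hasFDerivAt_apply k x).fun_sub (hasFDerivAt_log_sum_exp x)).exp

lemma tendsto_mul_softmax_sub_atTop (x v : ι → ℝ) (k : ι) :
    Tendsto (fun T : ℝ ↦ T * (softmax (x + T⁻¹ • v) k - softmax x k)) atTop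
      (nhds (softmax x k * (v k - ∑ l, softmax x l * v l))) := by
  simpa using (hasFDerivAt_softmax x k).lim_real v

end Softmax

theorem stmt_12_general {ι : Type*} [Fintype ι] (z : ι → ℝ) (k : ι) :
    Tendsto (fun T : ℝ ↦ T * (softmax (T⁻¹ • z) k - 1 / Fintype.card ι)) atTop
      (nhds ((z k - (∑ j, z j) / Fintype.card ι) / Fintype.card ι)) := by
  simpa only [zero_add, softmax_zero, one_div_mul_eq_div, ← Finset.sum_div]
    using tendsto_mul_softmax_sub_atTop 0 z k

/-- High-temperature asymptotic of the softmax: as `T → ∞`,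
`T·(softmax(z/T)_k - 1/N) → (z_k - z̄)/N`, where `z̄` is the mean of the logits. -/
theorem stmt_12 (N : ℕ) (hN : 0 < N) (z : Fin N → ℝ) (k : Fin N) :
    Tendsto
      (fun T : ℝ =>
        T * (Real.exp (z k / T) / (∑ l, Real.exp (z l / T)) - 1 / N))
      atTop
      (nhds ((z k - (∑ j, z j) / N) / N)) := by
  simpa only [softmax, Pi.smul_apply, smul_eq_mul, inv_mul_eq_div, Fintype.card_fin]
    using stmt_12_general z k
end
end
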